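/- Fix integers l ≥ 1 and k ≥ 0. Suppose (a_j) is a sequence in (0,1) with a_j → 0, and for each j suppose μ_j ∈ ℝ is such that the Dirichlet problem φ''(r) + φ'(r)/r − l²φ(r)/r² + μ_j φ(r) = 0 on (a_j,1), φ(a_j) = φ(1) = 0, has a not-identically-zero C² solution with exactly k zeros in (a_j,1). Suppose also μ⁰ ∈ ℝ is such that the equation φ''(r) + φ'(r)/r − l²φ(r)/r² + μ⁰φ(r) = 0 on (0,1) has a not-identically-zero solution φ which extends continuously to [0,1] with φ(0) = φ(1) = 0, satisfies ∫₀¹ (φ'(r)² + φ(r)²/r²) r dr < ∞, and has exactly k zeros in (0,1). Then μ_j → μ⁰ as j → ∞. (That is, the l-mode Dirichlet eigenvalues λ_{l,k}(a) of the annulus {a < |x| < 1} converge, as a → 0, to the l-mode Dirichlet eigenvalues of the unit disk.) -/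

import Mathlib

open Set Real Filter MeasureTheory

/-- `φ` with flux `P = r φ'` solves the radial equation on `(p,q)`, continuously up to `[p,q]`. -/
structure RadSol (c μ p q : ℝ) (φ P : ℝ → ℝ) : Prop where
  cont : ContinuousOn φ (Icc p q)
  d1 : ∀ r ∈ Ioo p q, HasDerivAt φ (P r / r) r
  d2 : ∀ r ∈ Ioo p q, HasDerivAt P ((c / r - μ * r) * φ r) r

theorem RadSol.mono {c μ p q p' q' : ℝ} {φ P : ℝ → ℝ} (h : RadSol c μ p q φ P)
    (hp : p ≤ p') (hq : q' ≤ q) : RadSol c μ p' q' φ P :=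
  ⟨h.cont.mono (Icc_subset_Icc hp hq), fun r hr => h.d1 r (Ioo_subset_Ioo hp hq hr),
    fun r hr => h.d2 r (Ioo_subset_Ioo hp hq hr)⟩

theorem RadSol.neg {c μ p q : ℝ} {φ P : ℝ → ℝ} (h : RadSol c μ p q φ P) :
    RadSol c μ p q (fun r => -φ r) (fun r => -P r) := by
  refine ⟨h.cont.neg, fun r hr => ?_, fun r hr => ?_⟩
  · refine (h.d1 r hr).neg.congr_deriv ?_
    ring
  · refine (h.d2 r hr).neg.congr_deriv ?_
    ring

theorem radSol_of_ode {l μ p q : ℝ} {φ : ℝ → ℝ} (hp : 0 ≤ p)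
    (hc : ContinuousOn φ (Icc p q)) (h2 : ContDiffOn ℝ 2 φ (Ioo p q))
    (hode : ∀ r ∈ Ioo p q, deriv (deriv φ) r + deriv φ r / r
        - l^2 * φ r / r^2 + μ * φ r = 0) :
    RadSol (l^2) μ p q φ (fun r => r * deriv φ r) := by
  have hd : ∀ r ∈ Ioo p q, HasDerivAt φ (deriv φ r) r := fun r hr =>
    ((h2.differentiableOn (by norm_num)).differentiableAt (isOpen_Ioo.mem_nhds hr)).hasDerivAt
  have h1 : ContDiffOn ℝ 1 (deriv φ) (Ioo p q) :=
    h2.deriv_of_isOpen isOpen_Ioo (by norm_num)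
  have hdd : ∀ r ∈ Ioo p q, HasDerivAt (deriv φ) (deriv (deriv φ) r) r := fun r hr =>
    ((h1.differentiableOn (by norm_num)).differentiableAt (isOpen_Ioo.mem_nhds hr)).hasDerivAt
  refine ⟨hc, fun r hr => ?_, fun r hr => ?_⟩
  · have hr0 : r ≠ 0 := (lt_of_le_of_lt hp hr.1).ne'
    refine (hd r hr).congr_deriv ?_
    field_simp
  · have hr0 : r ≠ 0 := (lt_of_le_of_lt hp hr.1).ne'
    refine ((hasDerivAt_id r).mul (hdd r hr)).congr_deriv ?_
    have e : deriv (deriv φ) r = - (deriv φ r / r) + l^2 * φ r / r^2 - μ * φ r := by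
      linarith [hode r hr]
    rw [e]
    simp only [id]
    field_simp
    ring

theorem RadSol.bounded {c μ p q : ℝ} {φ P : ℝ → ℝ} (h : RadSol c μ p q φ P) (hp : 0 < p)
    (hpq : p < q) : ∃ K, 0 < K ∧ ∀ r ∈ Ioo p q, |P r| ≤ K := by
  have hcont : ContinuousOn (fun r => (c / r - μ * r) * φ r) (Icc p q) := by
    refine ContinuousOn.mul (ContinuousOn.sub (ContinuousOn.div continuousOn_const
      continuousOn_id ?_) (by fun_prop)) h.cont
    intro r hr
    exact (lt_of_lt_of_le hp hr.1).ne'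
  obtain ⟨C, hC⟩ := isCompact_Icc.exists_bound_of_continuousOn hcont
  have hm : (p + q) / 2 ∈ Ioo p q := ⟨by linarith, by linarith⟩
  have hC0 : 0 ≤ C := (norm_nonneg _).trans (hC p ⟨le_rfl, hpq.le⟩)
  refine ⟨|P ((p + q) / 2)| + C * (q - p) + 1, ?_, fun r hr => ?_⟩
  · have : 0 ≤ C * (q - p) := mul_nonneg hC0 (by linarith)
    positivity
  · have := (convex_Ioo p q).norm_image_sub_le_of_norm_hasDerivWithin_le
      (fun x hx => (h.d2 x hx).hasDerivWithinAt)
      (fun x hx => hC x (Ioo_subset_Icc_self hx)) hm hr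
    rw [Real.norm_eq_abs, Real.norm_eq_abs] at this
    have h3 : |r - (p + q) / 2| ≤ q - p := by
      rw [abs_le]; constructor <;> linarith [hr.1, hr.2]
    have h4 : C * |r - (p + q) / 2| ≤ C * (q - p) := mul_le_mul_of_nonneg_left h3 hC0
    have h5 := abs_sub_abs_le_abs_sub (P r) (P ((p + q) / 2))
    linarith

theorem wronskian_deriv {c μ ν p q : ℝ} {u U v V : ℝ → ℝ} (hu : RadSol c μ p q u U)
    (hv : RadSol c ν p q v V) (r : ℝ) (hr : r ∈ Ioo p q) :
    HasDerivAt (fun r => v r * U r - u r * V r) ((ν - μ) * (r * u r * v r)) r := by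
  refine (((hv.d1 r hr).mul (hu.d2 r hr)).sub ((hu.d1 r hr).mul (hv.d2 r hr))).congr_deriv ?_
  ring

theorem wronskian_mono {c μ ν p q : ℝ} {u U v V : ℝ → ℝ} (hu : RadSol c μ p q u U)
    (hv : RadSol c ν p q v V) (hp : 0 ≤ p) (hμ : μ < ν)
    (hup : ∀ r ∈ Ioo p q, 0 < u r) (hvp : ∀ r ∈ Ioo p q, 0 < v r) :
    StrictMonoOn (fun r => v r * U r - u r * V r) (Ioo p q) := by
  have hd := wronskian_deriv hu hv
  refine strictMonoOn_of_deriv_pos (convex_Ioo p q)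
    (fun r hr => (hd r hr).continuousAt.continuousWithinAt) fun r hr => ?_
  rw [interior_Ioo] at hr
  rw [(hd r hr).deriv]
  have := hup r hr
  have := hvp r hr
  have : 0 < r := lt_of_le_of_lt hp hr.1
  have : 0 < ν - μ := by linarith
  positivity

theorem wronskian_right {c μ ν p q : ℝ} {u U v V : ℝ → ℝ} (hu : RadSol c μ p q u U)
    (hv : RadSol c ν p q v V) (hp : 0 ≤ p) (hμ : μ < ν)
    (hup : ∀ r ∈ Ioo p q, 0 < u r) (hvp : ∀ r ∈ Ioo p q, 0 < v r) (huq : u q = 0) :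
    ∀ r ∈ Ioo p q, v r * U r - u r * V r ≤ 0 := by
  intro r0 hr0
  by_contra! hw
  set w := v r0 * U r0 - u r0 * V r0 with hwdef
  have hmono := wronskian_mono hu hv hp hμ hup hvp
  obtain ⟨K, hK0, hK⟩ := (hv.mono hr0.1.le le_rfl).bounded (lt_of_le_of_lt hp hr0.1) hr0.2
  have hcq : Tendsto u (nhdsWithin q (Iio q)) (nhds 0) := by
    have := (hu.cont q ⟨(hr0.1.trans hr0.2).le, le_rfl⟩).mono_left
      (nhdsWithin_mono q (Ioo_subset_Icc_self))
    rw [huq, nhdsWithin_Ioo_eq_nhdsLT (hr0.1.trans hr0.2)] at this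
    exact this
  have hev : ∀ᶠ r in nhdsWithin q (Iio q), u r < w / K :=
    hcq.eventually (gt_mem_nhds (by positivity))
  obtain ⟨s, hs, hs'⟩ := (mem_nhdsLT_iff_exists_Ioo_subset' hr0.2).1 hev
  set t := max s r0 with ht
  have htq : t < q := max_lt hs hr0.2
  have hU : ∀ r ∈ Ioo t q, 0 < U r := by
    intro r hr
    have h1 : r ∈ Ioo p q := ⟨hr0.1.trans (lt_of_le_of_lt (le_max_right _ _) hr.1), hr.2⟩
    have h2 : r0 < r := lt_of_le_of_lt (le_max_right _ _) hr.1
    have h3 : u r < w / K := hs' ⟨lt_of_le_of_lt (le_max_left _ _) hr.1, hr.2⟩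
    have h4 := hmono hr0 h1 h2
    simp only at h4
    have h5 := hK r ⟨h2, hr.2⟩
    have h6 : u r * K < w := by rwa [lt_div_iff₀ hK0] at h3
    have h7 : -(u r * K) ≤ u r * V r := by
      have := mul_le_mul_of_nonneg_left (abs_le.1 h5).1 (hup r h1).le
      linarith
    have h8 : 0 < v r * U r := by linarith
    exact (pos_iff_pos_of_mul_pos h8).1 (hvp r h1)
  have hpt : p < t := hr0.1.trans_le (le_max_right _ _)
  have hsm : StrictMonoOn u (Icc t q) := by
    refine strictMonoOn_of_deriv_pos (convex_Icc t q)
      (hu.cont.mono (Icc_subset_Icc hpt.le le_rfl)) fun r hr => ?_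
    rw [interior_Icc] at hr
    rw [(hu.d1 r ⟨hpt.trans hr.1, hr.2⟩).deriv]
    exact div_pos (hU r hr) (by linarith [hr.1])
  have := hsm ⟨le_rfl, htq.le⟩ ⟨htq.le, le_rfl⟩ htq
  linarith [hup t ⟨hpt, htq⟩]

theorem wronskian_left {c μ ν p q : ℝ} {u U v V : ℝ → ℝ} (hu : RadSol c μ p q u U)
    (hv : RadSol c ν p q v V) (hp : 0 < p) (hμ : μ < ν)
    (hup : ∀ r ∈ Ioo p q, 0 < u r) (hvp : ∀ r ∈ Ioo p q, 0 < v r) (huq : u p = 0) :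
    ∀ r ∈ Ioo p q, 0 ≤ v r * U r - u r * V r := by
  intro r0 hr0
  by_contra! hw
  set w := v r0 * U r0 - u r0 * V r0 with hwdef
  have hmono := wronskian_mono hu hv hp.le hμ hup hvp
  obtain ⟨K, hK0, hK⟩ := hv.bounded hp (hr0.1.trans hr0.2)
  have hcq : Tendsto u (nhdsWithin p (Ioi p)) (nhds 0) := by
    have := (hu.cont p ⟨le_rfl, (hr0.1.trans hr0.2).le⟩).mono_left
      (nhdsWithin_mono p (Ioo_subset_Icc_self))
    rw [huq, nhdsWithin_Ioo_eq_nhdsGT (hr0.1.trans hr0.2)] at this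
    exact this
  have hw' : 0 < -w := by linarith
  have hev : ∀ᶠ r in nhdsWithin p (Ioi p), u r < -w / K :=
    hcq.eventually (gt_mem_nhds (by positivity))
  obtain ⟨s, hs, hs'⟩ := (mem_nhdsGT_iff_exists_Ioo_subset' hr0.1).1 hev
  set t := min s r0 with ht
  have htq : p < t := lt_min hs hr0.1
  have htq' : t < q := lt_of_le_of_lt (min_le_right _ _) hr0.2
  have hU : ∀ r ∈ Ioo p t, U r < 0 := by
    intro r hr
    have h1 : r ∈ Ioo p q := ⟨hr.1, hr.2.trans htq'⟩
    have h2 : r < r0 := lt_of_lt_of_le hr.2 (min_le_right _ _)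
    have h3 : u r < -w / K := hs' ⟨hr.1, lt_of_lt_of_le hr.2 (min_le_left _ _)⟩
    have h4 := hmono h1 hr0 h2
    simp only at h4
    have h5 := hK r h1
    have h6 : u r * K < -w := by rwa [lt_div_iff₀ hK0] at h3
    have h7 : u r * V r ≤ u r * K :=
      mul_le_mul_of_nonneg_left (abs_le.1 h5).2 (hup r h1).le
    have h8 : v r * U r < 0 := by linarith
    by_contra! h9
    have := mul_nonneg (hvp r h1).le h9
    linarith
  have hsm : StrictAntiOn u (Icc p t) := by
    refine strictAntiOn_of_deriv_neg (convex_Icc p t)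
      (hu.cont.mono (Icc_subset_Icc le_rfl htq'.le)) fun r hr => ?_
    rw [interior_Icc] at hr
    rw [(hu.d1 r ⟨hr.1, hr.2.trans htq'⟩).deriv]
    exact div_neg_of_neg_of_pos (hU r hr) (by linarith [hr.1])
  have := hsm ⟨le_rfl, htq.le⟩ ⟨htq.le, le_rfl⟩ htq
  linarith [hup t ⟨htq, htq'⟩]

theorem sturm_pos {c μ ν p q : ℝ} {u U v V : ℝ → ℝ} (hu : RadSol c μ p q u U)
    (hv : RadSol c ν p q v V) (hp : 0 < p) (hpq : p < q) (hμ : μ < ν)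
    (hup : ∀ r ∈ Ioo p q, 0 < u r) (hvp : ∀ r ∈ Ioo p q, 0 < v r)
    (hu0 : u p = 0) (hu1 : u q = 0) : False := by
  have h1 : (2 * p + q) / 3 ∈ Ioo p q := ⟨by linarith, by linarith⟩
  have h2 : (p + 2 * q) / 3 ∈ Ioo p q := ⟨by linarith, by linarith⟩
  have a1 := wronskian_left hu hv hp hμ hup hvp hu0 _ h1
  have a2 := wronskian_right hu hv hp.le hμ hup hvp hu1 _ h2
  have a3 := wronskian_mono hu hv hp.le hμ hup hvp h1 h2 (by linarith)
  simp only at a3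
  linarith

theorem singular_pos {c μ ε q : ℝ} {u U : ℝ → ℝ} (hu : RadSol c μ 0 q u U) (hq : 0 < q)
    (hε : 0 < ε) (hup : ∀ r ∈ Ioo 0 q, 0 < u r) (hu1 : u q = 0) :
    ∃ a0, 0 < a0 ∧ ∀ a ν v V, 0 < a → a < a0 → a < q → μ + ε ≤ ν → RadSol c ν a q v V →
      v a = 0 → (∀ r ∈ Ioo a q, 0 < v r) → False := by
  obtain ⟨M0, hM0⟩ := isCompact_Icc.exists_bound_of_continuousOn hu.cont
  set M := max M0 1 with hM
  have hMpos : 0 < M := lt_of_lt_of_le one_pos (le_max_right _ _)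
  have huM : ∀ r ∈ Ioo 0 q, u r ≤ M := fun r hr =>
    (le_abs_self _).trans ((hM0 r (Ioo_subset_Icc_self hr)).trans (le_max_left _ _))
  set m := q / 3 with hm
  set n := 2 * q / 3 with hn
  have hm0 : 0 < m := by positivity
  have hmn : m < n := by rw [hm, hn]; linarith
  have hnq : n < q := by rw [hn]; linarith
  have hsub : Icc m n ⊆ Ioo 0 q := fun r hr => ⟨hm0.trans_le hr.1, hr.2.trans_lt hnq⟩
  obtain ⟨x0, hx0, hmin⟩ := isCompact_Icc.exists_isMinOn (nonempty_Icc.2 hmn.le)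
    (hu.cont.mono (hsub.trans Ioo_subset_Icc_self))
  set κ := u x0 with hκ
  have hκ0 : 0 < κ := hup x0 (hsub hx0)
  set d := ε * (m * κ ^ 2) * (n - m) with hd
  have hd0 : 0 < d := by
    have : 0 < n - m := by linarith
    positivity
  refine ⟨min m (m * exp (-(M ^ 2 / d))), by positivity, ?_⟩
  intro a ν v V ha haa haq hν hv hva hvp
  have ham : a < m := haa.trans_le (min_le_left _ _)
  have hu' : RadSol c μ a q u U := hu.mono ha.le le_rfl
  have hup' : ∀ r ∈ Ioo a q, 0 < u r := fun r hr => hup r ⟨ha.trans hr.1, hr.2⟩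
  have hμν : μ < ν := by linarith
  have hW := wronskian_right hu' hv ha.le hμν hup' hvp hu1
  have hWd := wronskian_deriv hu' hv
  have hmono := wronskian_mono hu' hv ha.le hμν hup' hvp
  have hmI : m ∈ Ioo a q := ⟨ham, hmn.trans hnq⟩
  have hnI : n ∈ Ioo a q := ⟨ham.trans hmn, hnq⟩
  have hquot : ∀ r ∈ Ioo a q, HasDerivAt (fun r => v r / u r)
      (-(v r * U r - u r * V r) / (r * u r ^ 2)) r := by
    intro r hr
    have h0 : u r ≠ 0 := (hup' r hr).ne'
    have h1 : r ≠ 0 := (ha.trans hr.1).ne'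
    refine ((hv.d1 r hr).div (hu'.d1 r hr) h0).congr_deriv ?_
    field_simp
    ring
  set t := v m / u m with ht
  have ht0 : 0 < t := div_pos (hvp m hmI) (hup' m hmI)
  have hmon2 : MonotoneOn (fun r => v r / u r) (Ioo a q) := by
    refine monotoneOn_of_deriv_nonneg (convex_Ioo a q)
      (fun r hr => (hquot r hr).continuousAt.continuousWithinAt)
      (fun r hr => ?_) fun r hr => ?_
    · rw [interior_Ioo] at hr
      exact (hquot r hr).differentiableAt.differentiableWithinAt
    · rw [interior_Ioo] at hr
      rw [(hquot r hr).deriv]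
      have := hW r hr
      have : 0 < r := ha.trans hr.1
      exact div_nonneg (by linarith) (by positivity)
  have hsub' : Icc m n ⊆ Ioo a q := fun r hr => ⟨ham.trans_le hr.1, hr.2.trans_lt hnq⟩
  have hvt : ∀ r ∈ Icc m n, t * u r ≤ v r := by
    intro r hr
    have := hmon2 hmI (hsub' hr) hr.1
    simp only at this
    rwa [← ht, le_div_iff₀ (hup' r (hsub' hr))] at this
  -- the Wronskian drop
  have hWm : v m * U m - u m * V m ≤ -(t * d) := by
    have key := (convex_Icc m n).mul_sub_le_image_sub_of_le_deriv
      (f := fun r => v r * U r - u r * V r) (C := t * (ε * (m * κ ^ 2)))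
      (fun r hr => (hWd r (hsub' hr)).continuousAt.continuousWithinAt)
      (fun r hr => (hWd r (hsub' (interior_subset hr))).differentiableAt.differentiableWithinAt)
      (fun r hr => by
        have hr' := interior_subset hr
        rw [(hWd r (hsub' hr')).deriv]
        have k1 : κ ≤ u r := hmin hr'
        have k2 : m ≤ r := hr'.1
        have k3 : t * κ ≤ v r := (mul_le_mul_of_nonneg_left k1 ht0.le).trans (hvt r hr')
        have k4 : ε ≤ ν - μ := by linarith
        have k5 : 0 ≤ t * κ := by positivity
        calc t * (ε * (m * κ ^ 2)) = ε * (m * κ * (t * κ)) := by ring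
          _ ≤ (ν - μ) * (r * u r * v r) := by
            have : 0 ≤ ν - μ := by linarith
            have : 0 < r := hm0.trans_le k2
            have : 0 ≤ r * u r := mul_nonneg this.le (hκ0.le.trans k1)
            gcongr)
      m ⟨le_rfl, hmn.le⟩ n ⟨hmn.le, le_rfl⟩ hmn.le
    have h2 := hW n hnI
    have : t * (ε * (m * κ ^ 2)) * (n - m) = t * d := by rw [hd]; ring
    linarith
  -- growth of the quotient
  have hG : MonotoneOn (fun r => v r / u r - t * d / M ^ 2 * log r) (Icc a m) := by
    have hder : ∀ r ∈ Ioo a m, HasDerivAt (fun r => v r / u r - t * d / M ^ 2 * log r)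
        (-(v r * U r - u r * V r) / (r * u r ^ 2) - t * d / M ^ 2 * r⁻¹) r := fun r hr =>
      (hquot r ⟨hr.1, hr.2.trans hmI.2⟩).sub
        ((Real.hasDerivAt_log (ha.trans hr.1).ne').const_mul _)
    refine monotoneOn_of_deriv_nonneg (convex_Icc a m) ?_ ?_ ?_
    · have s1 : Icc a m ⊆ Icc a q := Icc_subset_Icc le_rfl hmI.2.le
      refine ContinuousOn.sub (ContinuousOn.div (hv.cont.mono s1) (hu'.cont.mono s1) ?_)
        (ContinuousOn.mul continuousOn_const (ContinuousOn.log continuousOn_id ?_))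
      · intro r hr
        exact (hup r ⟨ha.trans_le hr.1, hr.2.trans_lt hmI.2⟩).ne'
      · intro r hr
        exact (ha.trans_le hr.1).ne'
    · intro r hr
      rw [interior_Icc] at hr
      exact (hder r hr).differentiableAt.differentiableWithinAt
    · intro r hr
      rw [interior_Icc] at hr
      rw [(hder r hr).deriv]
      have hrI : r ∈ Ioo a q := ⟨hr.1, hr.2.trans hmI.2⟩
      have e1 := hmono hrI hmI hr.2
      simp only at e1
      have e2 : t * d ≤ -(v r * U r - u r * V r) := by linarith
      have hr0 : 0 < r := ha.trans hr.1
      have u0 := hup' r hrI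
      have e3 : u r ^ 2 ≤ M ^ 2 := by
        have := huM r ⟨hr0, hrI.2⟩
        gcongr
      have e4 : t * d / M ^ 2 * r⁻¹ = t * d / (r * M ^ 2) := by
        field_simp
      rw [e4, sub_nonneg]
      have : 0 < t * d := by positivity
      have : 0 ≤ -(v r * U r - u r * V r) := by linarith
      gcongr
  have fin := hG ⟨le_rfl, ham.le⟩ ⟨ham.le, le_rfl⟩ ham.le
  simp only [hva, zero_div] at fin
  rw [← ht] at fin
  have hlog : log a < log m - M ^ 2 / d := by
    have := Real.log_lt_log ha (haa.trans_le (min_le_right _ _))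
    rw [Real.log_mul hm0.ne' (exp_pos _).ne', Real.log_exp] at this
    linarith
  have h9 : t * d / M ^ 2 * (M ^ 2 / d) = t := by field_simp
  have h10 : 0 < t * d / M ^ 2 := by positivity
  have h11 := mul_lt_mul_of_pos_left hlog h10
  rw [mul_sub, h9] at h11
  linarith

/-- A continuous nonvanishing function is, up to sign, positive; the sign change keeps solutions. -/
theorem RadSol.sign {c μ p q : ℝ} {φ P : ℝ → ℝ} (h : RadSol c μ p q φ P)
    (hz : ∀ r ∈ Ioo p q, φ r ≠ 0) :
    ∃ ψ Q, RadSol c μ p q ψ Q ∧ (∀ r ∈ Ioo p q, 0 < ψ r) ∧ ∀ r, φ r = 0 → ψ r = 0 := by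
  by_cases hpos : ∀ r ∈ Ioo p q, 0 < φ r
  · exact ⟨φ, P, h, hpos, fun r hr => hr⟩
  · push Not at hpos
    obtain ⟨x, hx, hx0⟩ := hpos
    refine ⟨_, _, h.neg, fun r hr => ?_, fun r hr => by simp [hr]⟩
    by_contra! hneg
    have hcon : ContinuousOn φ (Ioo p q) := h.cont.mono Ioo_subset_Icc_self
    have := isPreconnected_Ioo.intermediate_value hx hr hcon
      (show (0:ℝ) ∈ Icc (φ x) (φ r) from ⟨hx0, by linarith⟩)
    obtain ⟨z, hz1, hz2⟩ := this
    exact hz z hz1 hz2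

theorem sturm {c μ ν p q : ℝ} {u U v V : ℝ → ℝ} (hu : RadSol c μ p q u U)
    (hv : RadSol c ν p q v V) (hp : 0 < p) (hpq : p < q) (hμ : μ < ν)
    (huz : ∀ r ∈ Ioo p q, u r ≠ 0)
    (hu0 : u p = 0) (hu1 : u q = 0) : ∃ r ∈ Ioo p q, v r = 0 := by
  by_contra! hvz
  obtain ⟨u', U', h1, h2, h3⟩ := hu.sign huz
  obtain ⟨v', V', k1, k2, k3⟩ := hv.sign hvz
  exact sturm_pos h1 k1 hp hpq hμ h2 k2 (h3 _ hu0) (h3 _ hu1)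

theorem singular {c μ ε q : ℝ} {u U : ℝ → ℝ} (hu : RadSol c μ 0 q u U) (hq : 0 < q)
    (hε : 0 < ε) (huz : ∀ r ∈ Ioo 0 q, u r ≠ 0) (hu1 : u q = 0) :
    ∃ a0, 0 < a0 ∧ ∀ a ν v V, 0 < a → a < a0 → a < q → μ + ε ≤ ν → RadSol c ν a q v V →
      v a = 0 → ∃ r ∈ Ioo a q, v r = 0 := by
  obtain ⟨u', U', h1, h2, h3⟩ := hu.sign huz
  obtain ⟨a0, ha0, H⟩ := singular_pos h1 hq hε h2 (h3 _ hu1)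
  refine ⟨a0, ha0, fun a ν v V b1 b2 b3 b4 hv hva => ?_⟩
  by_contra! hvz
  obtain ⟨v', V', k1, k2, k3⟩ := hv.sign hvz
  exact H a ν v' V' b1 b2 b3 b4 k1 (k3 _ hva) k2

/-- The finite set of zeros together with the endpoints. -/
theorem exists_zero_finset {φ : ℝ → ℝ} {p : ℝ} {k : ℕ} (hp : p < 1)
    (h : {r ∈ Set.Ioo p 1 | φ r = 0}.encard = (k : ℕ∞)) (h0 : φ p = 0) (h1 : φ 1 = 0) :
    ∃ Z S : Finset ℝ, Z.card = k ∧ S.card = k + 2 ∧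
      (∀ r, r ∈ Z ↔ r ∈ Ioo p 1 ∧ φ r = 0) ∧ (∀ r, r ∈ S ↔ r ∈ Icc p 1 ∧ φ r = 0) := by
  have hfin : {r ∈ Set.Ioo p 1 | φ r = 0}.Finite := Set.finite_of_encard_eq_coe h
  have hZ : ∀ r, r ∈ hfin.toFinset ↔ r ∈ Ioo p 1 ∧ φ r = 0 := fun r => by simp
  have hcard : hfin.toFinset.card = k := by
    rw [hfin.encard_eq_coe_toFinset_card] at h
    exact_mod_cast h
  refine ⟨hfin.toFinset, insert p (insert 1 hfin.toFinset), hcard, ?_, hZ, fun r => ?_⟩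
  · rw [Finset.card_insert_of_notMem, Finset.card_insert_of_notMem, hcard]
    · rw [hZ]; simp
    · rw [Finset.mem_insert, hZ]; simp [hp.ne]
  · rw [Finset.mem_insert, Finset.mem_insert, hZ]
    constructor
    · rintro (rfl | rfl | ⟨h2, h3⟩)
      · exact ⟨⟨le_rfl, hp.le⟩, h0⟩
      · exact ⟨⟨hp.le, le_rfl⟩, h1⟩
      · exact ⟨Ioo_subset_Icc_self h2, h3⟩
    · rintro ⟨⟨h2, h3⟩, h4⟩
      rcases h2.eq_or_lt with h5 | h5
      · exact Or.inl h5.symm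
      · rcases h3.eq_or_lt with h6 | h6
        · exact Or.inr (Or.inl h6)
        · exact Or.inr (Or.inr ⟨⟨h5, h6⟩, h4⟩)

/-- As `a → 0`, the `l`-mode Dirichlet eigenvalues `λ_{l,k}(a)` of
the annulus `{a < |x| < 1}` converge to the corresponding `l`-mode Dirichlet eigenvalue
of the unit disk. -/
theorem dirichlet_eigenvalues_converge_to_disk
    (l k : ℕ) (hl : 1 ≤ l)
    (a : ℕ → ℝ) (ha : ∀ j, a j ∈ Set.Ioo (0:ℝ) 1)
    (ha0 : Tendsto a atTop (nhds 0))
    (μ : ℕ → ℝ)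
    (hμ : ∀ j, ∃ φ : ℝ → ℝ, ContDiffOn ℝ 2 φ (Set.Icc (a j) 1) ∧
      (∀ r ∈ Set.Ioo (a j) 1, deriv (deriv φ) r + deriv φ r / r
        - (l:ℝ)^2 * φ r / r^2 + μ j * φ r = 0) ∧
      φ (a j) = 0 ∧ φ 1 = 0 ∧ (∃ r ∈ Set.Icc (a j) 1, φ r ≠ 0) ∧
      {r ∈ Set.Ioo (a j) 1 | φ r = 0}.encard = (k : ℕ∞))
    (μ0 : ℝ)
    (hμ0 : ∃ φ : ℝ → ℝ, ContDiffOn ℝ 2 φ (Set.Ioo (0:ℝ) 1) ∧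
      (∀ r ∈ Set.Ioo (0:ℝ) 1, deriv (deriv φ) r + deriv φ r / r
        - (l:ℝ)^2 * φ r / r^2 + μ0 * φ r = 0) ∧
      ContinuousOn φ (Set.Icc (0:ℝ) 1) ∧ φ 0 = 0 ∧ φ 1 = 0 ∧
      (∃ r ∈ Set.Icc (0:ℝ) 1, φ r ≠ 0) ∧
      IntegrableOn (fun r => (deriv φ r^2 + φ r^2 / r^2) * r) (Set.Ioo 0 1) ∧
      {r ∈ Set.Ioo (0:ℝ) 1 | φ r = 0}.encard = (k : ℕ∞)) :
    Tendsto μ atTop (nhds μ0) := by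
  obtain ⟨φ, hφ2, hode, hφc, hφ0, hφ1, -, -, hk⟩ := hμ0
  have hS0 := radSol_of_ode le_rfl hφc hφ2 hode
  obtain ⟨Z0, S0, cZ0, cS0, mZ0, mS0⟩ := exists_zero_finset zero_lt_one hk hφ0 hφ1
  choose ψ hψ2 hψode hψa hψ1 _ hψk using hμ
  have hS : ∀ j, RadSol ((l:ℝ)^2) (μ j) (a j) 1 (ψ j) (fun r => r * deriv (ψ j) r) := fun j =>
    radSol_of_ode (ha j).1.le (hψ2 j).continuousOn ((hψ2 j).mono Ioo_subset_Icc_self) (hψode j)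
  have hZ := fun j => exists_zero_finset (ha j).2 (hψk j) (hψa j) (hψ1 j)
  choose Z S cZ cS mZ mS using hZ
  have hlower : ∀ j, μ0 ≤ μ j := by
    intro j
    by_contra! hlt
    have := Finset.card_le_of_interleaved (s := S j) (t := Z0) (fun x hx y hy hxy hno => by
      rw [mS] at hx hy
      have x0 : 0 < x := (ha j).1.trans_le hx.1.1
      obtain ⟨r, hr, hr0⟩ := sturm ((hS j).mono hx.1.1 hy.1.2) (hS0.mono x0.le hy.1.2) x0 hxy hlt
        (fun r hr hr0 => hno r ((mS j r).2
          ⟨⟨hx.1.1.trans hr.1.le, hr.2.le.trans hy.1.2⟩, hr0⟩) hr) hx.2 hy.2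
      exact ⟨r, (mZ0 r).2 ⟨⟨x0.trans hr.1, hr.2.trans_le hy.1.2⟩, hr0⟩, hr.1, hr.2⟩)
    rw [cS, cZ0] at this
    omega
  have hupper : ∀ ε > 0, ∀ᶠ j in atTop, μ j < μ0 + ε := by
    intro ε hε
    have hloc : ∀ x ∈ S0, ∀ y ∈ S0, ∀ᶠ j in atTop, x < y → (∀ z ∈ S0, z ∉ Ioo x y) →
        μ0 + ε ≤ μ j → ∃ z ∈ Z j, x < z ∧ z < y := by
      intro x hx y hy
      by_cases hxy : x < y ∧ ∀ z ∈ S0, z ∉ Ioo x y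
      swap
      · exact Eventually.of_forall fun j h1 h2 => absurd ⟨h1, h2⟩ hxy
      obtain ⟨hxy, hno⟩ := hxy
      rw [mS0] at hx hy
      have huz : ∀ r ∈ Ioo x y, φ r ≠ 0 := fun r hr hr0 => hno r ((mS0 r).2
          ⟨⟨hx.1.1.trans hr.1.le, hr.2.le.trans hy.1.2⟩, hr0⟩) hr
      rcases hx.1.1.eq_or_lt with h0 | h0
      · subst h0
        obtain ⟨a0, ha0p, H⟩ := singular (hS0.mono le_rfl hy.1.2) hxy hε huz hy.2
        filter_upwards [ha0.eventually (gt_mem_nhds ha0p), ha0.eventually (gt_mem_nhds hxy)]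
          with j h1 h2 _ _ h3
        obtain ⟨r, hr, hr0⟩ := H (a j) (μ j) (ψ j) _ (ha j).1 h1 h2 h3
          ((hS j).mono le_rfl hy.1.2) (hψa j)
        exact ⟨r, (mZ j r).2 ⟨⟨hr.1, hr.2.trans_le hy.1.2⟩, hr0⟩, (ha j).1.trans hr.1, hr.2⟩
      · filter_upwards [ha0.eventually (gt_mem_nhds h0)] with j h1 _ _ h3
        obtain ⟨r, hr, hr0⟩ := sturm (hS0.mono hx.1.1 hy.1.2) ((hS j).mono h1.le hy.1.2) h0 hxy
          (by linarith : μ0 < μ j) huz hx.2 hy.2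
        exact ⟨r, (mZ j r).2 ⟨⟨h1.trans hr.1, hr.2.trans_le hy.1.2⟩, hr0⟩, hr.1, hr.2⟩
    have hall : ∀ᶠ j in atTop, ∀ x ∈ S0, ∀ y ∈ S0, x < y → (∀ z ∈ S0, z ∉ Ioo x y) →
        μ0 + ε ≤ μ j → ∃ z ∈ Z j, x < z ∧ z < y :=
      (Filter.eventually_all_finset S0).2 fun x hx =>
        (Filter.eventually_all_finset S0).2 fun y hy => hloc x hx y hy
    filter_upwards [hall] with j hj
    by_contra! hle
    have := Finset.card_le_of_interleaved (s := S0) (t := Z j)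
      (fun x hx y hy hxy hno => hj x hx y hy hxy hno hle)
    rw [cS0, cZ] at this
    omega
  rw [tendsto_order]
  refine ⟨fun b hb => Eventually.of_forall fun j => hb.trans_le (hlower j), fun b hb => ?_⟩
  filter_upwards [hupper (b - μ0) (by linarith)] with j hj
  linarith
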